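/- Let T, E₁, E₂ : ℝ × ℝ → ℝ³ and k₁, k₂ : ℝ × ℝ → ℝ be smooth with (T, E₁, E₂) pairwise ⟨·,·⟩_L-orthogonal, ⟨T,T⟩_L = ⟨E₂,E₂⟩_L = 1, ⟨E₁,E₁⟩_L = −1, satisfying Tₛ = k₁E₁ + k₂E₂, (E₁)ₛ = k₁T, (E₂)ₛ = −k₂T and T_t = (k₂)ₛE₁ + (k₁)ₛE₂, (E₁)_t = (k₂)ₛT + ½(k₁² − k₂²)E₂, (E₂)_t = −(k₁)ₛT + ½(k₁² − k₂²)E₁. Then the principal curvatures evolve according to (k₁)_t = (k₂)ₛₛ − ½(k₁² − k₂²)k₂ and (k₂)_t = (k₁)ₛₛ − ½(k₁² − k₂²)k₁. -/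

import Mathlib

noncomputable section

open Real

/-- Minkowski 3-space: ℝ³ as a vector type. -/
abbrev V3 : Type := Fin 3 → ℝ

/-- Lorentzian inner product ⟨x,y⟩_L = −x₁y₁ + x₂y₂ + x₃y₃ on ℝ³. -/
def lor (x y : V3) : ℝ := -(x 0 * y 0) + x 1 * y 1 + x 2 * y 2

/-- Lorentzian cross product x ×_L y = (x₃y₂ − x₂y₃, x₃y₁ − x₁y₃, x₁y₂ − x₂y₁). -/
def lcross (x y : V3) : V3 :=
  ![x 2 * y 1 - x 1 * y 2, x 2 * y 0 - x 0 * y 2, x 0 * y 1 - x 1 * y 0]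

/-- Partial derivative with respect to the first variable `s`. -/
def pds {E : Type*} [NormedAddCommGroup E] [NormedSpace ℝ E]
    (f : ℝ × ℝ → E) (p : ℝ × ℝ) : E := deriv (fun s => f (s, p.2)) p.1

/-- Partial derivative with respect to the second variable `t`. -/
def pdt {E : Type*} [NormedAddCommGroup E] [NormedSpace ℝ E]
    (f : ℝ × ℝ → E) (p : ℝ × ℝ) : E := deriv (fun t => f (p.1, t)) p.2

/-!
The evolution equations are the compatibility condition `T_st = T_ts` of the frame equations.
Differentiating `T_s = k₁ E₁ + k₂ E₂` in `t` and `T_t = a E₁ + b E₂` in `s`, the `T`-components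
agree identically, and comparing the coefficients of the linearly independent vectors `E₁`, `E₂`
gives `(k₁)_t + u k₂ = a_s` and `(k₂)_t + u k₁ = b_s`.  In the theorem `a = (k₂)_s`,
`b = (k₁)_s`, `u = ½ (k₁² - k₂²)`, and `E₁`, `E₂` are independent because they are orthogonal and
not null.
-/

section PartialDerivatives

variable {V : Type*} [NormedAddCommGroup V] [NormedSpace ℝ V]

theorem pds_eq_fderiv {f : ℝ × ℝ → V} {p : ℝ × ℝ} (hf : DifferentiableAt ℝ f p) :
    pds f p = fderiv ℝ f p (1, 0) :=
  (hf.hasFDerivAt.comp_hasDerivAt (f := fun s ↦ (s, p.2)) p.1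
    ((hasDerivAt_id p.1).prodMk (hasDerivAt_const p.1 p.2))).deriv

theorem pdt_eq_fderiv {f : ℝ × ℝ → V} {p : ℝ × ℝ} (hf : DifferentiableAt ℝ f p) :
    pdt f p = fderiv ℝ f p (0, 1) :=
  (hf.hasFDerivAt.comp_hasDerivAt (f := fun t ↦ (p.1, t)) p.2
    ((hasDerivAt_const p.2 p.1).prodMk (hasDerivAt_id p.2))).deriv

theorem pds_eq_fun_fderiv {f : ℝ × ℝ → V} (hf : Differentiable ℝ f) :
    pds f = fun p ↦ fderiv ℝ f p (1, 0) :=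
  funext fun p ↦ pds_eq_fderiv (hf p)

theorem pdt_eq_fun_fderiv {f : ℝ × ℝ → V} (hf : Differentiable ℝ f) :
    pdt f = fun p ↦ fderiv ℝ f p (0, 1) :=
  funext fun p ↦ pdt_eq_fderiv (hf p)

theorem differentiable_pds {f : ℝ × ℝ → V} (hf : ContDiff ℝ 2 f) : Differentiable ℝ (pds f) := by
  rw [pds_eq_fun_fderiv (hf.differentiable two_ne_zero)]
  exact ((hf.fderiv_right one_add_one_eq_two.le).differentiable one_ne_zero).clm_apply
    (differentiable_const _)

theorem pdt_pds_comm {f : ℝ × ℝ → V} (hf : ContDiff ℝ 2 f) (p : ℝ × ℝ) :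
    pdt (pds f) p = pds (pdt f) p := by
  have hf' : Differentiable ℝ f := hf.differentiable two_ne_zero
  have hf'' : DifferentiableAt ℝ (fderiv ℝ f) p :=
    (hf.fderiv_right one_add_one_eq_two.le).differentiable one_ne_zero p
  have fderiv_fderiv_apply (v w : ℝ × ℝ) :
      fderiv ℝ (fun q ↦ fderiv ℝ f q v) p w = fderiv ℝ (fderiv ℝ f) p w v := by
    simp [fderiv_clm_apply hf'' (differentiableAt_const v)]
  have hsymm : IsSymmSndFDerivAt ℝ f p := hf.contDiffAt.isSymmSndFDerivAt (by simp)
  rw [pds_eq_fun_fderiv hf', pdt_eq_fun_fderiv hf',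
    pdt_eq_fderiv (hf''.clm_apply (differentiableAt_const _)),
    pds_eq_fderiv (hf''.clm_apply (differentiableAt_const _)),
    fderiv_fderiv_apply, fderiv_fderiv_apply, hsymm.eq]

theorem fderiv_smul_add_smul_apply {M : Type*} [NormedAddCommGroup M] [NormedSpace ℝ M]
    {k l : M → ℝ} {X Y : M → V} {p : M}
    (hk : DifferentiableAt ℝ k p) (hl : DifferentiableAt ℝ l p)
    (hX : DifferentiableAt ℝ X p) (hY : DifferentiableAt ℝ Y p) (v : M) :
    fderiv ℝ (fun q ↦ k q • X q + l q • Y q) p v =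
      (k p • fderiv ℝ X p v + fderiv ℝ k p v • X p) +
        (l p • fderiv ℝ Y p v + fderiv ℝ l p v • Y p) := by
  simp [fderiv_fun_add (hk.fun_smul hX) (hl.fun_smul hY), fderiv_fun_smul hk hX,
    fderiv_fun_smul hl hY]

variable {k l : ℝ × ℝ → ℝ} {X Y : ℝ × ℝ → V} {p : ℝ × ℝ}

theorem pds_smul_add_smul (hk : DifferentiableAt ℝ k p) (hl : DifferentiableAt ℝ l p)
    (hX : DifferentiableAt ℝ X p) (hY : DifferentiableAt ℝ Y p) :
    pds (fun q ↦ k q • X q + l q • Y q) p =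
      (k p • pds X p + pds k p • X p) + (l p • pds Y p + pds l p • Y p) := by
  rw [pds_eq_fderiv ((hk.fun_smul hX).fun_add (hl.fun_smul hY)), pds_eq_fderiv hk, pds_eq_fderiv hl,
    pds_eq_fderiv hX, pds_eq_fderiv hY, fderiv_smul_add_smul_apply hk hl hX hY]

theorem pdt_smul_add_smul (hk : DifferentiableAt ℝ k p) (hl : DifferentiableAt ℝ l p)
    (hX : DifferentiableAt ℝ X p) (hY : DifferentiableAt ℝ Y p) :
    pdt (fun q ↦ k q • X q + l q • Y q) p =
      (k p • pdt X p + pdt k p • X p) + (l p • pdt Y p + pdt l p • Y p) := by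
  rw [pdt_eq_fderiv ((hk.fun_smul hX).fun_add (hl.fun_smul hY)), pdt_eq_fderiv hk, pdt_eq_fderiv hl,
    pdt_eq_fderiv hX, pdt_eq_fderiv hY, fderiv_smul_add_smul_apply hk hl hX hY]

end PartialDerivatives

/-- The Lorentzian inner product `lor` as a bilinear form, which makes Mathlib's results on
orthogonal families available for it. -/
def lorForm : LinearMap.BilinForm ℝ V3 :=
  LinearMap.mk₂ ℝ lor
    (fun x y z ↦ by simp only [lor, Pi.add_apply]; ring)
    (fun c x y ↦ by simp only [lor, Pi.smul_apply, smul_eq_mul]; ring)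
    (fun x y z ↦ by simp only [lor, Pi.add_apply]; ring)
    (fun c x y ↦ by simp only [lor, Pi.smul_apply, smul_eq_mul]; ring)

theorem lor_comm (x y : V3) : lor x y = lor y x := by
  simp only [lor]
  ring

theorem linearIndependent_pair_of_lor_eq_zero {x y : V3} (hx : lor x x ≠ 0) (hy : lor y y ≠ 0)
    (hxy : lor x y = 0) : LinearIndependent ℝ ![x, y] := by
  have hyx : lor y x = 0 := by rw [lor_comm, hxy]
  refine LinearMap.linearIndependent_of_isOrthoᵢ (B := lorForm) ?_ ?_
  · simp [LinearMap.isOrthoᵢ_def, Fin.forall_fin_two, lorForm, hxy, hyx]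
  · simp [Fin.forall_fin_two, lorForm, hx, hy]

theorem statement13_general {V : Type*} [NormedAddCommGroup V] [NormedSpace ℝ V]
    {T E₁ E₂ : ℝ × ℝ → V} {k₁ k₂ a b u : ℝ × ℝ → ℝ}
    (hT : ContDiff ℝ 2 T) (hE₁ : Differentiable ℝ E₁) (hE₂ : Differentiable ℝ E₂)
    (hk₁ : Differentiable ℝ k₁) (hk₂ : Differentiable ℝ k₂)
    (ha : Differentiable ℝ a) (hb : Differentiable ℝ b)
    (hli : ∀ p, LinearIndependent ℝ ![E₁ p, E₂ p])
    (hTs : ∀ p, pds T p = k₁ p • E₁ p + k₂ p • E₂ p)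
    (hE₁s : ∀ p, pds E₁ p = k₁ p • T p)
    (hE₂s : ∀ p, pds E₂ p = -(k₂ p) • T p)
    (hTt : ∀ p, pdt T p = a p • E₁ p + b p • E₂ p)
    (hE₁t : ∀ p, pdt E₁ p = a p • T p + u p • E₂ p)
    (hE₂t : ∀ p, pdt E₂ p = -(b p) • T p + u p • E₁ p) :
    (∀ p, pdt k₁ p = pds a p - u p * k₂ p) ∧ (∀ p, pdt k₂ p = pds b p - u p * k₁ p) := by
  rw [← forall_and]
  intro p
  have mixed_partials :
      (k₁ p • pdt E₁ p + pdt k₁ p • E₁ p) + (k₂ p • pdt E₂ p + pdt k₂ p • E₂ p) =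
        (a p • pds E₁ p + pds a p • E₁ p) + (b p • pds E₂ p + pds b p • E₂ p) := by
    rw [← pdt_smul_add_smul (hk₁ p) (hk₂ p) (hE₁ p) (hE₂ p),
      ← pds_smul_add_smul (ha p) (hb p) (hE₁ p) (hE₂ p), ← funext hTs, ← funext hTt]
    exact pdt_pds_comm hT p
  rw [hE₁s, hE₂s, hE₁t, hE₂t] at mixed_partials
  refine (hli p).eq_of_pair ?_
  linear_combination (norm := module) mixed_partials

/-- For a parallel frame `(T,E₁,E₂)` of signature `(+,−,+)` with
the stated `s`- and `t`-evolution equations (with `u = ½(k₁² − k₂²)`), the principal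
curvatures evolve by `(k₁)_t = (k₂)ₛₛ − ½(k₁² − k₂²)k₂` and
`(k₂)_t = (k₁)ₛₛ − ½(k₁² − k₂²)k₁`. -/
theorem statement13 (T E₁ E₂ : ℝ × ℝ → V3) (k₁ k₂ : ℝ × ℝ → ℝ)
    (hT : ContDiff ℝ (⊤ : ℕ∞) T) (hE₁ : ContDiff ℝ (⊤ : ℕ∞) E₁) (hE₂ : ContDiff ℝ (⊤ : ℕ∞) E₂)
    (hk₁ : ContDiff ℝ (⊤ : ℕ∞) k₁) (hk₂ : ContDiff ℝ (⊤ : ℕ∞) k₂)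
    (hTT : ∀ p, lor (T p) (T p) = 1)
    (hE₁E₁ : ∀ p, lor (E₁ p) (E₁ p) = -1)
    (hE₂E₂ : ∀ p, lor (E₂ p) (E₂ p) = 1)
    (hTE₁ : ∀ p, lor (T p) (E₁ p) = 0)
    (hTE₂ : ∀ p, lor (T p) (E₂ p) = 0)
    (hE₁E₂ : ∀ p, lor (E₁ p) (E₂ p) = 0)
    (hTs : ∀ p, pds T p = k₁ p • E₁ p + k₂ p • E₂ p)
    (hE₁s : ∀ p, pds E₁ p = k₁ p • T p)
    (hE₂s : ∀ p, pds E₂ p = -(k₂ p) • T p)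
    (hTt : ∀ p, pdt T p = (pds k₂ p) • E₁ p + (pds k₁ p) • E₂ p)
    (hE₁t : ∀ p, pdt E₁ p = (pds k₂ p) • T p + ((k₁ p ^ 2 - k₂ p ^ 2) / 2) • E₂ p)
    (hE₂t : ∀ p, pdt E₂ p = -(pds k₁ p) • T p + ((k₁ p ^ 2 - k₂ p ^ 2) / 2) • E₁ p) :
    (∀ p, pdt k₁ p = pds (pds k₂) p - (k₁ p ^ 2 - k₂ p ^ 2) / 2 * k₂ p) ∧
    (∀ p, pdt k₂ p = pds (pds k₁) p - (k₁ p ^ 2 - k₂ p ^ 2) / 2 * k₁ p) := by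
  have two_le_infty : (2 : WithTop ℕ∞) ≤ (⊤ : ℕ∞) := WithTop.coe_le_coe.2 le_top
  have infty_ne_zero : ((⊤ : ℕ∞) : WithTop ℕ∞) ≠ 0 := by simp
  exact statement13_general (hT.of_le two_le_infty)
    (hE₁.differentiable infty_ne_zero) (hE₂.differentiable infty_ne_zero)
    (hk₁.differentiable infty_ne_zero) (hk₂.differentiable infty_ne_zero)
    (differentiable_pds (hk₂.of_le two_le_infty)) (differentiable_pds (hk₁.of_le two_le_infty))
    (fun p ↦ linearIndependent_pair_of_lor_eq_zero (by simp [hE₁E₁]) (by simp [hE₂E₂]) (hE₁E₂ p))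
    hTs hE₁s hE₂s hTt hE₁t hE₂t
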